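/- Let k ≥ 3 be an integer and 0 < b < 1/k a constant. There exist n_1 = n_1(k,b) and c_0 = c_0(k,b) > 0 such that the following holds for every integer n ≥ n_1: if H is a (1,k)-partite (k+1)-graph with partition classes X, [n], |X| = n/k, and δ_1(N_H(x)) > (1/2 + b)·binom(n-1,k-1) for every x ∈ X, then for every c with 0 < c < c_0 there exists a matching M in H with |M| ≤ 2kcn such that for every balanced subset S ⊆ V(H) \ V(M) with |S| ≤ (k+1)c^{1.5} n/2, the induced subhypergraph H[V(M) ∪ S] has a perfect matching. -/

import Mathlib

/-- A perfect matching of the subhypergraph of `H` induced on the vertex set `Q`: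
a set of pairwise disjoint edges of `H`, each contained in `Q`, covering `Q`. -/
def HasPM {V : Type*} [DecidableEq V] (H : Finset (Finset V)) (Q : Finset V) : Prop :=
  ∃ M ⊆ H, (∀ e ∈ M, e ⊆ Q) ∧
    (M : Set (Finset V)).Pairwise (fun a b => Disjoint a b) ∧
    (∀ v ∈ Q, ∃ e ∈ M, v ∈ e)

/-!
An absorber of a block `{x, v₁, …, v_k}` consists of `k` disjoint edges `{yᵢ, uᵢ} ∪ aᵢ` such that
all `{yᵢ, vᵢ} ∪ aᵢ` and `{x, u₁, …, u_k}` are edges as well: swapping the `uᵢ` for the `vᵢ` covers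
the block in addition. As the links `N_H(y)` have relative minimum degree above `1/2 + b/2`, the
links of any `u` and `v` in `N_H(y)` have at least `b n^(k-1)` tuples in common. Hence a random
tuple is an absorber of a given block with probability at least about `b^k / 2`, also after
discarding the tuples that repeat a vertex or meet a small set.

Disjoint absorbers are chosen greedily so as to shrink the potential `∑ₜ exp (-#absorbers of t)`,
taken over all blocks `t`, by a factor `exp (-α / 2)` in every step, where `α = b^k / 4`. After `N`
steps each block therefore has at least `α N / 2 - log #blocks` of the chosen absorbers. A balanced
set splits into blocks, which can be given distinct absorbers as long as there are no more of them
than that.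

With `N = ⌈c n⌉` this is enough unless `c n` is of order `log n`. But if `c^(3/2) n < 2`, only the
empty set has to be absorbed, and otherwise `c n ≥ n^(1/3)`.
-/

open Finset

section PerfectMatching

variable {V : Type*} [DecidableEq V] {H : Finset (Finset V)}

theorem hasPM_iff {Q : Finset V} :
    HasPM H Q ↔ ∃ M ⊆ H, (M : Set (Finset V)).PairwiseDisjoint id ∧ M.biUnion id = Q := by
  constructor
  · rintro ⟨M, hM, hMQ, hMd, hMc⟩
    refine ⟨M, hM, hMd, subset_antisymm (biUnion_subset.2 hMQ) fun v hv => ?_⟩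
    exact mem_biUnion.2 (hMc v hv)
  · rintro ⟨M, hM, hMd, rfl⟩
    exact ⟨M, hM, fun e he => subset_biUnion_of_mem id he, hMd, fun v hv => mem_biUnion.1 hv⟩

theorem HasPM.of_mem {e : Finset V} (he : e ∈ H) : HasPM H e :=
  hasPM_iff.2 ⟨{e}, by simpa, by simp, by simp⟩

theorem HasPM.union {P Q : Finset V} (hP : HasPM H P) (hQ : HasPM H Q) (hPQ : Disjoint P Q) :
    HasPM H (P ∪ Q) := by
  obtain ⟨M, hM, hMd, rfl⟩ := hasPM_iff.1 hP
  obtain ⟨N, hN, hNd, rfl⟩ := hasPM_iff.1 hQ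
  refine hasPM_iff.2 ⟨M ∪ N, union_subset hM hN, ?_, union_biUnion⟩
  rw [coe_union]
  exact hMd.union hNd fun e he f hf _ =>
    hPQ.mono (subset_biUnion_of_mem id he) (subset_biUnion_of_mem id hf)

theorem HasPM.biUnion {ι : Type*} {s : Finset ι} {W : ι → Finset V}
    (hd : (s : Set ι).PairwiseDisjoint W) (hW : ∀ i ∈ s, HasPM H (W i)) :
    HasPM H (s.biUnion W) := by
  simp only [hasPM_iff] at hW
  choose! M hM hMd hMW using hW
  refine hasPM_iff.2 ⟨s.biUnion M, biUnion_subset.2 hM, ?_, ?_⟩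
  · rw [coe_biUnion]
    refine Set.PairwiseDisjoint.biUnion_finset (fun i hi j hj hij => ?_) hMd
    rw [Function.onFun, sup_eq_biUnion, sup_eq_biUnion]
    exact (hMW i hi).symm ▸ (hMW j hj).symm ▸ hd hi hj hij
  · rw [biUnion_biUnion]
    exact biUnion_congr rfl hMW

open scoped Classical in
theorem HasPM.biUnion_union_biUnion {ι κ : Type*} [Fintype κ] {F : Finset ι}
    {W : ι → Finset V} {T : κ → Finset V} (hW : (F : Set ι).PairwiseDisjoint W)
    (hT : Pairwise (Function.onFun Disjoint T)) (hWT : ∀ i ∈ F, ∀ j, Disjoint (W i) (T j))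
    (hPM : ∀ i ∈ F, HasPM H (W i))
    (habs : ∀ j, Fintype.card κ ≤ #{i ∈ F | HasPM H (W i ∪ T j)}) :
    HasPM H (F.biUnion W ∪ univ.biUnion T) := by
  -- Hall's condition holds for trivial reasons, so distinct `T j` get distinct absorbers `W (f j)`.
  obtain ⟨f, hf, hfF⟩ :=
    (all_card_le_biUnion_card_iff_exists_injective fun j => {i ∈ F | HasPM H (W i ∪ T j)}).1 <| by
      intro s
      obtain rfl | ⟨j, hj⟩ := s.eq_empty_or_nonempty
      · simp
      · exact (card_le_univ s).trans ((habs j).trans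
          (card_le_card (subset_biUnion_of_mem (fun j => {i ∈ F | HasPM H (W i ∪ T j)}) hj)))
  simp only [mem_filter] at hfF
  have hsplit : F.biUnion W ∪ univ.biUnion T =
      (F \ univ.image f).biUnion W ∪ univ.biUnion fun j => W (f j) ∪ T j := by
    have hfF' : univ.image f ⊆ F := image_subset_iff.2 fun j _ => (hfF j).1
    conv_lhs => rw [← sdiff_union_of_subset hfF', union_biUnion, image_biUnion, union_assoc]
    congr 1
    ext v
    simp only [mem_union, mem_biUnion, mem_univ, true_and, exists_or]
  rw [hsplit]
  refine HasPM.union (.biUnion (hW.subset (by simp)) fun i hi => hPM i (mem_sdiff.1 hi).1)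
    (.biUnion (fun j _ j' _ hj => ?_) fun j _ => (hfF j).2) ?_
  · have := hT hj
    have := hWT _ (hfF j).1 j'
    have := (hWT _ (hfF j').1 j).symm
    have := hW (hfF j).1 (hfF j').1 (hf.ne hj)
    simp_all [Function.onFun]
  · rw [disjoint_biUnion_left]
    intro i hi
    rw [disjoint_biUnion_right]
    intro j _
    rw [disjoint_union_right]
    rw [mem_sdiff] at hi
    refine ⟨hW hi.1 (hfF j).1 ?_, hWT i hi.1 j⟩
    rintro rfl
    exact hi.2 (mem_image_of_mem f (mem_univ j))

theorem card_mul_eq_card_biUnion {M : Finset (Finset V)} {r : ℕ} (hr : ∀ e ∈ M, #e = r)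
    (hM : (M : Set (Finset V)).PairwiseDisjoint id) : #M * r = #(M.biUnion id) := by
  rw [card_biUnion hM, ← sum_const_nat hr]
  rfl

end PerfectMatching

section GreedySelection

variable {V Ω ι : Type*} [Fintype ι]

theorem sum_exp_neg_card_insert_le {R : Ω → ι → Prop} [DecidableRel R] [DecidableEq Ω] {α : ℝ}
    {F : Finset Ω} {ω : Ω} (hω : ω ∉ F)
    (h : α * ∑ t, Real.exp (-#{ω' ∈ F | R ω' t}) ≤
      ∑ t with R ω t, Real.exp (-#{ω' ∈ F | R ω' t})) :
    ∑ t, Real.exp (-#{ω' ∈ insert ω F | R ω' t}) ≤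
      Real.exp (-(α / 2)) * ∑ t, Real.exp (-#{ω' ∈ F | R ω' t}) := by
  set w : ι → ℝ := fun t => Real.exp (-#{ω' ∈ F | R ω' t})
  have hexp : Real.exp (-1) ≤ 1 / 2 := by
    rw [Real.exp_neg, one_div]
    exact inv_anti₀ two_pos (by linarith [Real.add_one_le_exp (1 : ℝ)])
  have hinsert (t : ι) :
      Real.exp (-#{ω' ∈ insert ω F | R ω' t}) ≤ w t - if R ω t then w t / 2 else 0 := by
    rw [filter_insert]
    split_ifs with ht
    · rw [card_insert_of_notMem (by simp [hω]), Nat.cast_succ, neg_add, Real.exp_add]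
      nlinarith [Real.exp_pos (-#{ω' ∈ F | R ω' t} : ℝ)]
    · simp [w]
  calc ∑ t, Real.exp (-#{ω' ∈ insert ω F | R ω' t})
      ≤ ∑ t, (w t - if R ω t then w t / 2 else 0) := sum_le_sum fun t _ => hinsert t
    _ = ∑ t, w t - (∑ t with R ω t, w t) / 2 := by
        rw [sum_sub_distrib, ← sum_filter, sum_div]
    _ ≤ (-(α / 2) + 1) * ∑ t, w t := by linarith
    _ ≤ Real.exp (-(α / 2)) * ∑ t, w t := by
        gcongr
        exact Real.add_one_le_exp _

variable [Fintype Ω] [Nonempty Ω]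

theorem exists_mul_sum_le_sum_filter {R : Ω → ι → Prop} [DecidableRel R] {α : ℝ}
    (hR : ∀ t, α * Fintype.card Ω ≤ #{ω | R ω t}) {w : ι → ℝ} (hw : ∀ t, 0 ≤ w t) :
    ∃ ω, α * ∑ t, w t ≤ ∑ t with R ω t, w t := by
  suffices h : ∑ _ω : Ω, α * ∑ t, w t ≤ ∑ ω, ∑ t with R ω t, w t by
    obtain ⟨ω, -, hω⟩ := exists_le_of_sum_le univ_nonempty h
    exact ⟨ω, hω⟩
  calc ∑ _ω : Ω, α * ∑ t, w t = ∑ t, α * Fintype.card Ω * w t := by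
        rw [sum_const, card_univ, nsmul_eq_mul, ← mul_sum]
        ring
    _ ≤ ∑ t, #{ω | R ω t} * w t := by
        gcongr with t
        exacts [hw t, hR t]
    _ = ∑ ω, ∑ t with R ω t, w t := by
        simp only [sum_filter]
        rw [sum_comm]
        simp [← sum_filter]

variable [Nonempty ι] [DecidableEq V] {W : Ω → Finset V} {R : Ω → ι → Prop} [DecidableRel R]
  {α : ℝ} {N d : ℕ}

theorem exists_pairwiseDisjoint_sum_exp_neg_card_le (hα : 0 < α) (hne : ∀ ω, (W ω).Nonempty)
    (hd : ∀ ω, #(W ω) ≤ d)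
    (hR : ∀ U : Finset V, #U ≤ N * d → ∀ t,
      α * Fintype.card Ω ≤ #{ω | Disjoint (W ω) U ∧ R ω t}) {m : ℕ} (hm : m ≤ N) :
    ∃ F : Finset Ω, (F : Set Ω).PairwiseDisjoint W ∧ #F ≤ m ∧ (∀ ω ∈ F, ∃ t, R ω t) ∧
      ∑ t, Real.exp (-#{ω ∈ F | R ω t}) ≤ Real.exp (-(α / 2 * m)) * Fintype.card ι := by
  classical
  induction m with
  | zero => exact ⟨∅, by simp⟩
  | succ m ih =>
    obtain ⟨F, hFd, hFm, hFR, hsum⟩ := ih (Nat.le_of_succ_le hm)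
    have hU : #(F.biUnion W) ≤ N * d :=
      (card_biUnion_le_card_mul F W d fun ω _ => hd ω).trans
        (Nat.mul_le_mul_right d (hFm.trans (Nat.le_of_succ_le hm)))
    obtain ⟨ω, hω⟩ := exists_mul_sum_le_sum_filter (hR _ hU)
      (w := fun t => Real.exp (-#{ω ∈ F | R ω t})) fun t => (Real.exp_pos _).le
    obtain ⟨t, ht⟩ : ({t | Disjoint (W ω) (F.biUnion W) ∧ R ω t} : Finset ι).Nonempty :=
      nonempty_of_sum_ne_zero (hω.trans_lt' (by positivity)).ne'
    obtain ⟨hdisj, hωt⟩ := (mem_filter.1 ht).2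
    have hωF : ω ∉ F := fun h =>
      (hne ω).ne_empty (disjoint_self.1 (hdisj.mono_right (subset_biUnion_of_mem W h)))
    refine ⟨insert ω F, ?_, by rw [card_insert_of_notMem hωF]; lia, ?_, ?_⟩
    · rw [coe_insert]
      exact hFd.insert fun ω' hω' _ => hdisj.mono_right (subset_biUnion_of_mem W hω')
    · exact (forall_mem_insert _ _ _).2 ⟨⟨t, hωt⟩, hFR⟩
    · calc ∑ t, Real.exp (-#{ω' ∈ insert ω F | R ω' t})
          ≤ Real.exp (-(α / 2)) * ∑ t, Real.exp (-#{ω' ∈ F | R ω' t}) :=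
            sum_exp_neg_card_insert_le hωF <| hω.trans <|
              sum_le_sum_of_subset_of_nonneg (monotone_filter_right _ fun _ _ => And.right)
                fun _ _ _ => (Real.exp_pos _).le
        _ ≤ Real.exp (-(α / 2)) * (Real.exp (-(α / 2 * m)) * Fintype.card ι) := by gcongr
        _ = Real.exp (-(α / 2 * (m + 1 : ℕ))) * Fintype.card ι := by
            rw [← mul_assoc, ← Real.exp_add]
            push_cast
            ring_nf

theorem exists_pairwiseDisjoint_forall_le_card (hα : 0 < α) (hne : ∀ ω, (W ω).Nonempty)
    (hd : ∀ ω, #(W ω) ≤ d)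
    (hR : ∀ U : Finset V, #U ≤ N * d → ∀ t,
      α * Fintype.card Ω ≤ #{ω | Disjoint (W ω) U ∧ R ω t}) :
    ∃ F : Finset Ω, (F : Set Ω).PairwiseDisjoint W ∧ #F ≤ N ∧ (∀ ω ∈ F, ∃ t, R ω t) ∧
      ∀ t, α / 2 * N - Real.log (Fintype.card ι) ≤ #{ω ∈ F | R ω t} := by
  obtain ⟨F, hFd, hFN, hFR, hsum⟩ :=
    exists_pairwiseDisjoint_sum_exp_neg_card_le hα hne hd hR le_rfl
  refine ⟨F, hFd, hFN, hFR, fun t => ?_⟩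
  have h : Real.exp (-#{ω ∈ F | R ω t}) ≤ Real.exp (-(α / 2 * N)) * Fintype.card ι :=
    (single_le_sum (f := fun t => Real.exp (-#{ω ∈ F | R ω t}))
      (fun t _ => (Real.exp_pos _).le) (mem_univ t)).trans hsum
  rw [← Real.le_log_iff_exp_le (by positivity), Real.log_mul (by positivity) (by positivity),
    Real.log_exp] at h
  linarith

end GreedySelection

section Counting

theorem one_sub_mul_pow_le_descFactorial (n r s : ℕ) :
    (1 - r * (r + s) / n : ℝ) * n ^ r ≤ ((n - s).descFactorial r : ℝ) := by
  obtain rfl | hr := r.eq_zero_or_pos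
  · simp
  obtain rfl | hn := n.eq_zero_or_pos
  · simp [hr.ne']
  have hn' : (0 : ℝ) < n := by exact_mod_cast hn
  obtain h | h := le_or_gt (r + s) n
  · have hle : (r + s : ℝ) / n ≤ 1 := (div_le_one hn').2 (by exact_mod_cast h)
    calc (1 - r * (r + s) / n : ℝ) * n ^ r = (1 + r * -((r + s) / n)) * n ^ r := by ring
      _ ≤ (1 + -((r + s) / n)) ^ r * n ^ r := by
          gcongr
          exact one_add_mul_le_pow (by linarith) r
      _ = ((n - (r + s) : ℕ) : ℝ) ^ r := by
          rw [← mul_pow, Nat.cast_sub h]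
          push_cast
          field_simp
          ring
      _ ≤ ((n - s + 1 - r : ℕ) : ℝ) ^ r :=
          pow_le_pow_left₀ (Nat.cast_nonneg _) (Nat.cast_le.2 (by lia)) r
      _ ≤ ((n - s).descFactorial r : ℝ) := by
          exact_mod_cast Nat.pow_sub_le_descFactorial (n - s) r
  · refine le_trans (mul_nonpos_of_nonpos_of_nonneg ?_ (by positivity)) (Nat.cast_nonneg _)
    rw [sub_nonpos, one_le_div hn']
    exact_mod_cast h.le.trans (Nat.le_mul_of_pos_left _ hr)

theorem one_sub_mul_pow_le_card_injective_forall_notMem {ι β : Type*} [Fintype ι] [DecidableEq ι]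
    [Fintype β] [DecidableEq β] (B : Finset β) :
    (1 - Fintype.card ι * (Fintype.card ι + #B) / Fintype.card β : ℝ) * Fintype.card (ι → β) ≤
      #{f : ι → β | f.Injective ∧ ∀ i, f i ∉ B} := by
  have h : Fintype.card (ι ↪ (Bᶜ : Finset β)) ≤ #{f : ι → β | f.Injective ∧ ∀ i, f i ∉ B} := by
    rw [← card_univ]
    refine card_le_card_of_injOn (fun f i => f i) (fun f _ => ?_) fun f _ g _ hfg => ?_
    · rw [mem_coe, mem_filter]
      exact ⟨mem_univ _, Subtype.val_injective.comp f.injective,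
        fun i => mem_compl.1 (f i).2⟩
    · exact DFunLike.ext _ _ fun i => Subtype.ext (congrFun hfg i)
  rw [Fintype.card_embedding_eq, Fintype.card_coe, card_compl] at h
  rw [Fintype.card_fun, Nat.cast_pow]
  exact (one_sub_mul_pow_le_descFactorial _ _ _).trans (Nat.cast_le.2 h)

theorem half_add_mul_pow_le_factorial_mul_choose {n K : ℕ} {b : ℝ} (hb : 0 < b)
    (hn : K * (K + 1) * (1 + 2 * b) / b ≤ n) :
    (1 / 2 + b / 2) * (n : ℝ) ^ K ≤ K.factorial * ((1 / 2 + b) * ((n - 1).choose K : ℝ)) := by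
  have hK : (K * (K + 1) / n : ℝ) ≤ b / (1 + 2 * b) := by
    rw [div_le_iff₀ hb] at hn
    refine div_le_of_le_mul₀ (by positivity) (by positivity) ?_
    rw [div_mul_eq_mul_div, le_div_iff₀ (by positivity)]
    linarith
  calc (1 / 2 + b / 2) * (n : ℝ) ^ K
      = (1 / 2 + b) * ((1 - b / (1 + 2 * b)) * (n : ℝ) ^ K) := by
        field_simp
        ring
    _ ≤ (1 / 2 + b) * ((1 - K * (K + 1) / n) * (n : ℝ) ^ K) := by gcongr
    _ ≤ (1 / 2 + b) * ((n - 1).descFactorial K : ℝ) := by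
        gcongr
        exact_mod_cast one_sub_mul_pow_le_descFactorial n K 1
    _ = K.factorial * ((1 / 2 + b) * ((n - 1).choose K : ℝ)) := by
        rw [Nat.descFactorial_eq_factorial_mul_choose]
        push_cast
        ring

theorem mul_card_le_card_inter {α : Type*} [Fintype α] [DecidableEq α] {A B : Finset α} {β : ℝ}
    (hA : (1 / 2 + β / 2) * Fintype.card α ≤ #A) (hB : (1 / 2 + β / 2) * Fintype.card α ≤ #B) :
    β * Fintype.card α ≤ #(A ∩ B) := by
  have hadd : (#(A ∪ B) : ℝ) + #(A ∩ B) = #A + #B := by exact_mod_cast card_union_add_card_inter A B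
  have hunion : (#(A ∪ B) : ℝ) ≤ Fintype.card α := Nat.cast_le.2 (card_le_univ _)
  linarith

theorem factorial_le_card_image_eq {Y : Type*} [Fintype Y] [DecidableEq Y] {K : ℕ} {t : Finset Y}
    (ht : #t = K) : K.factorial ≤ #{a : Fin K → Y | univ.image a = t} := by
  have hcard : Fintype.card (Fin K ≃ t) = K.factorial := by
    rw [Fintype.card_equiv (t.equivFinOfCardEq ht).symm, Fintype.card_fin]
  rw [← hcard, ← card_univ]
  refine card_le_card_of_injOn (fun σ i => (σ i : Y)) (fun σ _ => ?_) fun σ _ τ _ h =>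
    Equiv.ext fun i => Subtype.ext (congrFun h i)
  rw [mem_coe, mem_filter]
  refine ⟨mem_univ _, ext fun y => ⟨fun hy => ?_, fun hy => ?_⟩⟩
  · obtain ⟨i, -, rfl⟩ := mem_image.1 hy
    exact (σ i).2
  · exact mem_image.2 ⟨σ.symm ⟨y, hy⟩, mem_univ _, by simp⟩

end Counting

section Partite

variable {X Y : Type*} [DecidableEq X] [DecidableEq Y]

/-- The edge `{x} ∪ s` of a `(1,k)`-partite hypergraph with classes `X` and `Y`, as a subset of
their disjoint union. -/
def starEdge (x : X) (s : Finset Y) : Finset (X ⊕ Y) :=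
  insert (.inl x) (s.image .inr)

@[simp]
theorem inl_mem_starEdge {x x' : X} {s : Finset Y} : .inl x' ∈ starEdge x s ↔ x' = x := by
  simp [starEdge]

@[simp]
theorem inr_mem_starEdge {x : X} {y : Y} {s : Finset Y} : .inr y ∈ starEdge x s ↔ y ∈ s := by
  simp [starEdge]

theorem card_starEdge (x : X) (s : Finset Y) : #(starEdge x s) = #s + 1 := by
  rw [starEdge, card_insert_of_notMem (by simp), card_image_of_injective _ Sum.inr_injective]

/-- `H` is a `(1,k)`-partite `(k+1)`-graph with classes `X` and `Y`. -/
def IsPartite (k : ℕ) (H : Finset (Finset (X ⊕ Y))) : Prop :=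
  ∀ e ∈ H, ∃ (x : X) (s : Finset Y), #s = k ∧ e = starEdge x s

theorem IsPartite.card_eq {k : ℕ} {H : Finset (Finset (X ⊕ Y))} (hH : IsPartite k H)
    {e : Finset (X ⊕ Y)} (he : e ∈ H) : #e = k + 1 := by
  obtain ⟨x, s, hs, rfl⟩ := hH e he
  rw [card_starEdge, hs]

/-- The degree of `y` in the link `N_H(x)`. -/
def linkDegree (H : Finset (Finset (X ⊕ Y))) (x : X) (y : Y) : ℕ :=
  #{e ∈ H | .inl x ∈ e ∧ .inr y ∈ e}

section LinkTuples

variable [Fintype Y] {ι κ : Type*} [Fintype ι] [DecidableEq ι] [Fintype κ] [DecidableEq κ]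
  {H : Finset (Finset (X ⊕ Y))}

/-- The tuples in `Y` forming an edge of `H` with `x`, i.e. the link `N_H(x)` with its edges
listed as tuples. -/
def linkTuples (H : Finset (Finset (X ⊕ Y))) (ι : Type*) [Fintype ι] [DecidableEq ι] (x : X) :
    Finset (ι → Y) :=
  {u | starEdge x (univ.image u) ∈ H}

/-- The tuples in `Y` forming an edge of `H` with `x` and `y`. -/
def pairLinkTuples (H : Finset (Finset (X ⊕ Y))) (κ : Type*) [Fintype κ] [DecidableEq κ] (x : X)
    (y : Y) : Finset (κ → Y) :=
  {a | starEdge x (insert y (univ.image a)) ∈ H}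

theorem factorial_mul_linkDegree_le_card_pairLinkTuples {k : ℕ} (hH : IsPartite k H)
    (x : X) (y : Y) :
    (k - 1).factorial * linkDegree H x y ≤ #(pairLinkTuples H (Fin (k - 1)) x y) := by
  have hmaps : ∀ a ∈ pairLinkTuples H (Fin (k - 1)) x y,
      starEdge x (insert y (univ.image a)) ∈ ({e ∈ H | .inl x ∈ e ∧ .inr y ∈ e} : Finset _) := by
    intro a ha
    simpa [pairLinkTuples] using ha
  rw [card_eq_sum_card_fiberwise hmaps, linkDegree, mul_comm, ← smul_eq_mul]
  refine card_nsmul_le_sum _ _ _ fun e he => ?_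
  obtain ⟨heH, hxe, hye⟩ := mem_filter.1 he
  obtain ⟨x', s, hs, rfl⟩ := hH e heH
  rw [inl_mem_starEdge] at hxe
  rw [inr_mem_starEdge] at hye
  subst hxe
  refine (factorial_le_card_image_eq (t := s.erase y) ?_).trans (card_le_card fun a ha => ?_)
  · rw [card_erase_of_mem hye, hs]
  · have has : insert y (univ.image a) = s := by rw [(mem_filter.1 ha).2, insert_erase hye]
    simpa [pairLinkTuples, has] using heH

theorem mul_card_le_card_linkTuples {K : ℕ} {x : X} {γ : ℝ}
    (hγ : ∀ y, γ * Fintype.card (Fin K → Y) ≤ #(pairLinkTuples H (Fin K) x y)) :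
    γ * Fintype.card (Fin (K + 1) → Y) ≤ #(linkTuples H (Fin (K + 1)) x) := by
  have h : #((univ : Finset Y).sigma fun y => pairLinkTuples H (Fin K) x y) ≤
      #(linkTuples H (Fin (K + 1)) x) := by
    refine card_le_card_of_injOn (fun q => (Fin.cons q.1 q.2 : Fin (K + 1) → Y)) ?_ ?_
    · rintro ⟨y, a⟩ h
      have himage : univ.image (Fin.cons y a : Fin (K + 1) → Y) = insert y (univ.image a) := by
        ext z
        simp [Fin.exists_fin_succ, eq_comm]
      simpa [linkTuples, pairLinkTuples, himage] using h
    · rintro ⟨y, a⟩ _ ⟨y', a'⟩ _ h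
      obtain ⟨rfl, rfl⟩ := Fin.cons_inj.1 h
      rfl
  rw [card_sigma] at h
  calc γ * Fintype.card (Fin (K + 1) → Y) = ∑ _y : Y, γ * Fintype.card (Fin K → Y) := by
        rw [sum_const, card_univ, nsmul_eq_mul]
        simp only [Fintype.card_fun, Fintype.card_fin]
        push_cast
        ring
    _ ≤ ∑ y : Y, (#(pairLinkTuples H (Fin K) x y) : ℝ) := sum_le_sum fun y _ => hγ y
    _ ≤ #(linkTuples H (Fin (K + 1)) x) := by exact_mod_cast h

end LinkTuples

end Partite

section Absorber

variable {X Y ι J κ : Type*} [DecidableEq X] [DecidableEq Y] [Fintype ι] [Fintype J] [Fintype κ]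

/-- The set of vertices occurring in a tuple in `X` and a tuple in `Y`. -/
def tupleVertices (p : (ι → X) × (J → Y)) : Finset (X ⊕ Y) :=
  (univ.image p.1).disjSum (univ.image p.2)

@[simp]
theorem inl_mem_tupleVertices {p : (ι → X) × (J → Y)} {x : X} :
    .inl x ∈ tupleVertices p ↔ ∃ i, p.1 i = x := by
  simp [tupleVertices]

@[simp]
theorem inr_mem_tupleVertices {p : (ι → X) × (J → Y)} {y : Y} :
    .inr y ∈ tupleVertices p ↔ ∃ j, p.2 j = y := by
  simp [tupleVertices]

theorem card_tupleVertices_le (p : (ι → X) × (J → Y)) :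
    #(tupleVertices p) ≤ Fintype.card ι + Fintype.card J := by
  rw [tupleVertices, card_disjSum]
  exact add_le_add card_image_le card_image_le

theorem disjoint_tupleVertices_iff {p : (ι → X) × (J → Y)} {U : Finset (X ⊕ Y)} :
    Disjoint (tupleVertices p) U ↔ (∀ i, p.1 i ∉ U.toLeft) ∧ ∀ j, p.2 j ∉ U.toRight := by
  simp [disjoint_left]

theorem one_sub_sub_mul_card_le_card_injective_disjoint_tupleVertices [DecidableEq ι]
    [DecidableEq J] [Fintype X] [Fintype Y] (U : Finset (X ⊕ Y)) :
    (1 - Fintype.card ι * (Fintype.card ι + #U) / Fintype.card X -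
        Fintype.card J * (Fintype.card J + #U) / Fintype.card Y : ℝ) *
      Fintype.card ((ι → X) × (J → Y)) ≤
    #{p : (ι → X) × (J → Y) |
      p.1.Injective ∧ p.2.Injective ∧ Disjoint (tupleVertices p) U} := by
  set A : Finset (ι → X) := {f | f.Injective ∧ ∀ i, f i ∉ U.toLeft}
  set B : Finset (J → Y) := {g | g.Injective ∧ ∀ j, g j ∉ U.toRight}
  have hAB : ({p | p.1.Injective ∧ p.2.Injective ∧ Disjoint (tupleVertices p) U} :
      Finset ((ι → X) × (J → Y))) = A ×ˢ B := by
    ext p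
    simp only [A, B, disjoint_tupleVertices_iff, mem_filter_univ, mem_product]
    tauto
  have hA : (1 - Fintype.card ι * (Fintype.card ι + #U) / Fintype.card X : ℝ) *
      Fintype.card (ι → X) ≤ #A := by
    refine le_trans ?_ (one_sub_mul_pow_le_card_injective_forall_notMem U.toLeft)
    gcongr
    exact card_toLeft_le
  have hB : (1 - Fintype.card J * (Fintype.card J + #U) / Fintype.card Y : ℝ) *
      Fintype.card (J → Y) ≤ #B := by
    refine le_trans ?_ (one_sub_mul_pow_le_card_injective_forall_notMem U.toRight)
    gcongr
    exact card_toRight_le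
  have hA' : (#A : ℝ) ≤ Fintype.card (ι → X) := Nat.cast_le.2 (card_le_univ A)
  have hB' : (#B : ℝ) ≤ Fintype.card (J → Y) := Nat.cast_le.2 (card_le_univ B)
  have hunion : (Fintype.card (ι → X) * Fintype.card (J → Y) : ℝ) - #A * #B ≤
      (Fintype.card (ι → X) - #A) * Fintype.card (J → Y) +
        Fintype.card (ι → X) * (Fintype.card (J → Y) - #B) := by
    nlinarith [mul_nonneg (sub_nonneg.2 hA') (sub_nonneg.2 hB')]
  have hAY := mul_le_mul_of_nonneg_right hA (Nat.cast_nonneg (α := ℝ) (Fintype.card (J → Y)))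
  have hXB := mul_le_mul_of_nonneg_left hB (Nat.cast_nonneg (α := ℝ) (Fintype.card (ι → X)))
  rw [hAB, card_product, Fintype.card_prod, Nat.cast_mul, Nat.cast_mul]
  linarith

variable {H : Finset (Finset (X ⊕ Y))} {x : X} {v : ι → Y} {p : (ι → X) × (ι ⊕ ι × κ → Y)}

theorem hasPM_tupleVertices (hp₁ : p.1.Injective) (hp₂ : p.2.Injective)
    (hp : ∀ i, starEdge (p.1 i) (insert (p.2 (.inl i)) (univ.image fun j => p.2 (.inr (i, j)))) ∈
      H) : HasPM H (tupleVertices p) := by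
  have hunion : tupleVertices p = univ.biUnion fun i =>
      starEdge (p.1 i) (insert (p.2 (.inl i)) (univ.image fun j => p.2 (.inr (i, j)))) := by
    ext (a | a)
    · simp [eq_comm]
    · simp [exists_or, eq_comm]
  rw [hunion]
  refine HasPM.biUnion (fun i _ i' _ hi => disjoint_left.2 ?_) fun i _ => HasPM.of_mem (hp i)
  rintro (a | a)
  · simp only [inl_mem_starEdge]
    exact fun h h' => hi (hp₁ (h.symm.trans h'))
  · simp only [inr_mem_starEdge, mem_insert, mem_image, mem_univ, true_and]
    rintro (rfl | ⟨j, rfl⟩) <;> simp [hp₂.eq_iff, hi, hi.symm]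

variable [Fintype Y] [DecidableEq κ]

/-- For every `i` the vertex `p.1 i` forms an edge both with the pivot `p.2 (inl i)` and with
`v i`, each time completed by the tuple `p.2 (inr (i, ·))`; moreover `x` forms an edge with the
pivots. So the pivots may be swapped for the `v i` in order to cover `x` and the `v i`. -/
def IsSwap [DecidableEq ι] (H : Finset (Finset (X ⊕ Y))) (x : X) (v : ι → Y)
    (p : (ι → X) × (ι ⊕ ι × κ → Y)) : Prop :=
  (fun i => p.2 (.inl i)) ∈ linkTuples H ι x ∧
    ∀ i, (fun j => p.2 (.inr (i, j))) ∈
      pairLinkTuples H κ (p.1 i) (p.2 (.inl i)) ∩ pairLinkTuples H κ (p.1 i) (v i)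

/-- An absorber of the edge-like set formed by `x` and the `v i`: a swap consisting of distinct
vertices that avoid this set. -/
def IsAbsorber [DecidableEq ι] (H : Finset (Finset (X ⊕ Y))) (x : X) (v : ι → Y)
    (p : (ι → X) × (ι ⊕ ι × κ → Y)) : Prop :=
  p.1.Injective ∧ p.2.Injective ∧ Disjoint (tupleVertices p) (starEdge x (univ.image v)) ∧
    IsSwap H x v p

variable [DecidableEq ι]

theorem IsAbsorber.hasPM (h : IsAbsorber H x v p) : HasPM H (tupleVertices p) := by
  obtain ⟨hp₁, hp₂, -, -, hp⟩ := h
  simp only [pairLinkTuples, mem_inter, mem_filter_univ] at hp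
  exact hasPM_tupleVertices hp₁ hp₂ fun i => (hp i).1

theorem IsAbsorber.hasPM_union (h : IsAbsorber H x v p) (hv : v.Injective) :
    HasPM H (tupleVertices p ∪ starEdge x (univ.image v)) := by
  obtain ⟨hp₁, hp₂, hd, hx, hp⟩ := h
  simp only [linkTuples, pairLinkTuples, mem_inter, mem_filter_univ] at hx hp
  have hpx (i) : p.1 i ≠ x := fun h =>
    disjoint_left.1 hd (inl_mem_tupleVertices.2 ⟨i, h⟩) (by simp)
  have hpv (j i) : p.2 j ≠ v i := fun h =>
    disjoint_left.1 hd (inr_mem_tupleVertices.2 ⟨j, h⟩) (by simp)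
  have hinj : (Sum.elim v fun q => p.2 (.inr q)).Injective :=
    hv.sumElim (hp₂.comp Sum.inr_injective) fun i q => (hpv (.inr q) i).symm
  have hswap : HasPM H (tupleVertices (p.1, Sum.elim v fun q => p.2 (.inr q))) :=
    hasPM_tupleVertices hp₁ hinj fun i => (hp i).2
  convert hswap.union (HasPM.of_mem hx) ?_ using 1
  · ext (a | a)
    · simp
    · simp only [mem_union, inr_mem_tupleVertices, inr_mem_starEdge, mem_image, mem_univ,
        true_and, Sum.exists, Sum.elim_inl, Sum.elim_inr]
      tauto
  · rw [disjoint_left]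
    rintro (a | a)
    · simp only [inl_mem_tupleVertices, inl_mem_starEdge]
      rintro ⟨i, rfl⟩
      exact hpx i
    · simp only [inr_mem_tupleVertices, inr_mem_starEdge, mem_image, mem_univ, true_and]
      rintro ⟨i | q, rfl⟩ ⟨i', h⟩
      · exact hpv (.inl i') i h
      · exact Sum.inl_ne_inr (hp₂ h)

variable [Fintype X]

open scoped Classical in
theorem pow_div_two_mul_card_le_card_isSwap {β : ℝ} (hβ : 0 ≤ β)
    (hx : 1 / 2 * Fintype.card (ι → Y) ≤ (#(linkTuples H ι x) : ℝ))
    (hlink : ∀ x' y y', β * Fintype.card (κ → Y) ≤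
      #(pairLinkTuples H κ x' y ∩ pairLinkTuples H κ x' y')) :
    β ^ Fintype.card ι / 2 * Fintype.card ((ι → X) × (ι ⊕ ι × κ → Y)) ≤
      #{p : (ι → X) × (ι ⊕ ι × κ → Y) | IsSwap H x v p} := by
  set T := ((univ : Finset (ι → X)) ×ˢ linkTuples H ι x).sigma fun q =>
    Fintype.piFinset fun i => pairLinkTuples H κ (q.1 i) (q.2 i) ∩ pairLinkTuples H κ (q.1 i) (v i)
    with hT
  have hle : #T ≤ #{p : (ι → X) × (ι ⊕ ι × κ → Y) | IsSwap H x v p} := by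
    refine card_le_card_of_injOn
      (fun q => (q.1.1, Sum.elim q.1.2 fun r => q.2 r.1 r.2)) ?_ ?_
    · rintro ⟨⟨f, u⟩, a⟩ h
      simpa [hT, IsSwap] using h
    · rintro ⟨⟨f, u⟩, a⟩ _ ⟨⟨f', u'⟩, a'⟩ _ h
      obtain ⟨rfl, h⟩ := Prod.ext_iff.1 h
      obtain rfl : u = u' := funext fun i => congrFun h (.inl i)
      obtain rfl : a = a' := funext fun i => funext fun j => congrFun h (.inr (i, j))
      rfl
  have hfiber (q : (ι → X) × (ι → Y)) : (β * Fintype.card (κ → Y)) ^ Fintype.card ι ≤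
      (#(Fintype.piFinset fun i =>
        pairLinkTuples H κ (q.1 i) (q.2 i) ∩ pairLinkTuples H κ (q.1 i) (v i)) : ℝ) := by
    rw [Fintype.card_piFinset, Nat.cast_prod, ← card_univ (α := ι), ← prod_const]
    exact prod_le_prod (fun i _ => by positivity) fun i _ => hlink _ _ _
  calc β ^ Fintype.card ι / 2 * Fintype.card ((ι → X) × (ι ⊕ ι × κ → Y))
      = Fintype.card (ι → X) * (1 / 2 * Fintype.card (ι → Y)) *
        (β * Fintype.card (κ → Y)) ^ Fintype.card ι := by
        simp only [Fintype.card_prod, Fintype.card_fun, Fintype.card_sum]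
        push_cast
        ring
    _ ≤ Fintype.card (ι → X) * #(linkTuples H ι x) *
        (β * Fintype.card (κ → Y)) ^ Fintype.card ι := by gcongr
    _ = ∑ _q ∈ (univ : Finset (ι → X)) ×ˢ linkTuples H ι x,
        (β * Fintype.card (κ → Y)) ^ Fintype.card ι := by
        rw [sum_const, card_product, card_univ, nsmul_eq_mul, Nat.cast_mul]
    _ ≤ #T := by
        rw [hT, card_sigma, Nat.cast_sum]
        exact sum_le_sum fun q _ => hfiber q
    _ ≤ #{p : (ι → X) × (ι ⊕ ι × κ → Y) | IsSwap H x v p} := Nat.cast_le.2 hle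

open scoped Classical in
theorem mul_card_le_card_disjoint_isAbsorber {β : ℝ} (hβ : 0 ≤ β)
    (hx : 1 / 2 * Fintype.card (ι → Y) ≤ (#(linkTuples H ι x) : ℝ))
    (hlink : ∀ x' y y', β * Fintype.card (κ → Y) ≤
      #(pairLinkTuples H κ x' y ∩ pairLinkTuples H κ x' y')) (U : Finset (X ⊕ Y)) {m : ℕ}
    (hm : #U + Fintype.card ι + 1 ≤ m) :
    (β ^ Fintype.card ι / 2 - Fintype.card ι * (Fintype.card ι + m) / Fintype.card X -
        Fintype.card (ι ⊕ ι × κ) * (Fintype.card (ι ⊕ ι × κ) + m) / Fintype.card Y : ℝ) *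
      Fintype.card ((ι → X) × (ι ⊕ ι × κ → Y)) ≤
    #{p : (ι → X) × (ι ⊕ ι × κ → Y) | Disjoint (tupleVertices p) U ∧ IsAbsorber H x v p} := by
  set A : Finset ((ι → X) × (ι ⊕ ι × κ → Y)) := {p | IsSwap H x v p}
  set B : Finset ((ι → X) × (ι ⊕ ι × κ → Y)) :=
    {p | p.1.Injective ∧ p.2.Injective ∧
      Disjoint (tupleVertices p) (U ∪ starEdge x (univ.image v))}
  have hAB : A ∩ B ⊆ ({p | Disjoint (tupleVertices p) U ∧ IsAbsorber H x v p} : Finset _) := by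
    intro p hp
    simp only [A, B, mem_inter, mem_filter_univ, disjoint_union_right] at hp ⊢
    obtain ⟨hswap, hp₁, hp₂, hU, hd⟩ := hp
    exact ⟨hU, hp₁, hp₂, hd, hswap⟩
  have hA := pow_div_two_mul_card_le_card_isSwap (v := v) hβ hx hlink
  have hB : (1 - Fintype.card ι * (Fintype.card ι + m) / Fintype.card X -
        Fintype.card (ι ⊕ ι × κ) * (Fintype.card (ι ⊕ ι × κ) + m) / Fintype.card Y : ℝ) *
      Fintype.card ((ι → X) × (ι ⊕ ι × κ → Y)) ≤ #B := by
    have hU : #(U ∪ starEdge x (univ.image v)) ≤ m := by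
      have := card_union_le U (starEdge x (univ.image v))
      have := card_starEdge x (univ.image v)
      have : #(univ.image v) ≤ Fintype.card ι := card_image_le
      lia
    refine le_trans ?_ (one_sub_sub_mul_card_le_card_injective_disjoint_tupleVertices _)
    gcongr
  have hadd : (#(A ∪ B) : ℝ) + #(A ∩ B) = #A + #B := by exact_mod_cast card_union_add_card_inter A B
  have hunion : (#(A ∪ B) : ℝ) ≤ Fintype.card ((ι → X) × (ι ⊕ ι × κ → Y)) :=
    Nat.cast_le.2 (card_le_univ _)
  have hcard_inter : (#(A ∩ B) : ℝ) ≤ #{p : (ι → X) × (ι ⊕ ι × κ → Y) |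
      Disjoint (tupleVertices p) U ∧ IsAbsorber H x v p} := Nat.cast_le.2 (card_le_card hAB)
  linarith

end Absorber

section BalancedSets

variable {X Y : Type*} {k : ℕ}

theorem card_filter_isLeft (S : Finset (X ⊕ Y)) : #{v ∈ S | v.isLeft} = #S.toLeft := by
  have h : {v ∈ S | v.isLeft} = S.toLeft.map .inl := by ext (a | a) <;> simp
  rw [h, card_map]

theorem card_filter_isRight (S : Finset (X ⊕ Y)) : #{v ∈ S | v.isRight} = #S.toRight := by
  have h : {v ∈ S | v.isRight} = S.toRight.map .inr := by ext (a | a) <;> simp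
  rw [h, card_map]

theorem card_eq_succ_mul_card_toLeft {S : Finset (X ⊕ Y)} (hS : #S.toRight = k * #S.toLeft) :
    #S = (k + 1) * #S.toLeft := by
  rw [← card_toLeft_add_card_toRight, hS]
  ring

variable [DecidableEq X] [DecidableEq Y] {H M : Finset (Finset (X ⊕ Y))}

theorem exists_pairwise_disjoint_biUnion_starEdge_eq {S : Finset (X ⊕ Y)}
    (hS : #S.toRight = k * #S.toLeft) :
    ∃ v : S.toLeft → Fin k ↪ Y,
      Pairwise (Function.onFun Disjoint fun x : S.toLeft => starEdge (x : X) (univ.image (v x))) ∧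
      univ.biUnion (fun x : S.toLeft => starEdge (x : X) (univ.image (v x))) = S := by
  let e : S.toLeft × Fin k ≃ S.toRight := Fintype.equivOfCardEq (by simp [hS, mul_comm])
  let v (x : S.toLeft) : Fin k ↪ Y :=
    (Function.Embedding.sectR x (Fin k)).trans (e.toEmbedding.trans (.subtype _))
  refine ⟨v, fun x x' hx => disjoint_left.2 ?_, ?_⟩
  · rintro (a | a)
    · simp only [inl_mem_starEdge]
      exact fun h h' => hx (Subtype.ext (h.symm.trans h'))
    · simp only [inr_mem_starEdge, mem_image, mem_univ, true_and]
      rintro ⟨i, rfl⟩ ⟨j, h⟩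
      exact hx (Prod.ext_iff.1 (e.injective (Subtype.ext h))).1.symm
  · ext (a | a)
    · simp
    · simp only [mem_biUnion, mem_univ, true_and, inr_mem_starEdge, mem_image]
      constructor
      · rintro ⟨x, i, rfl⟩
        exact mem_toRight.1 (e (x, i)).2
      · intro ha
        exact ⟨(e.symm ⟨a, mem_toRight.2 ha⟩).1, (e.symm ⟨a, mem_toRight.2 ha⟩).2, by simp [v]⟩

open scoped Classical in
theorem HasPM.biUnion_union_of_balanced {Ω : Type*} {F : Finset Ω} {W : Ω → Finset (X ⊕ Y)}
    (hW : (F : Set Ω).PairwiseDisjoint W) (hPM : ∀ ω ∈ F, HasPM H (W ω)) {S : Finset (X ⊕ Y)}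
    (hd : Disjoint (F.biUnion W) S) (hS : #S.toRight = k * #S.toLeft)
    (habs : ∀ x (v : Fin k ↪ Y),
      #S.toLeft ≤ #{ω ∈ F | HasPM H (W ω ∪ starEdge x (univ.image v))}) :
    HasPM H (F.biUnion W ∪ S) := by
  obtain ⟨v, hv, hvS⟩ := exists_pairwise_disjoint_biUnion_starEdge_eq hS
  rw [← hvS]
  refine .biUnion_union_biUnion hW hv (fun ω hω x => ?_) hPM fun x => ?_
  · refine hd.mono (subset_biUnion_of_mem W hω) (subset_of_subset_of_eq ?_ hvS)
    exact subset_biUnion_of_mem (fun x : S.toLeft => starEdge (x : X) (univ.image (v x)))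
      (mem_univ x)
  · rw [Fintype.card_coe]
    exact habs x (v x)

/-- The matching `M` can absorb every balanced set of at most `t` vertices outside `V(M)`: its
union with `V(M)` is perfectly matched in `H`. -/
def AbsorbsBalanced (H : Finset (Finset (X ⊕ Y))) (k : ℕ) (M : Finset (Finset (X ⊕ Y)))
    (t : ℝ) : Prop :=
  ∀ S : Finset (X ⊕ Y), (∀ v ∈ S, ∀ e ∈ M, v ∉ e) →
    #{v ∈ S | v.isRight = true} = k * #{v ∈ S | v.isLeft = true} → (#S : ℝ) ≤ t →
      HasPM H (M.biUnion id ∪ S)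

theorem AbsorbsBalanced.mono {s t : ℝ} (h : AbsorbsBalanced H k M t) (hst : s ≤ t) :
    AbsorbsBalanced H k M s :=
  fun S hSM hS hcard => h S hSM hS (hcard.trans hst)

theorem absorbsBalanced_empty {t : ℝ} (ht : t < k + 1) : AbsorbsBalanced H k ∅ t := by
  intro S _ hS hcard
  rw [card_filter_isLeft, card_filter_isRight] at hS
  have hleft : #S.toLeft = 0 := by
    by_contra h
    have : k + 1 ≤ #S :=
      card_eq_succ_mul_card_toLeft hS ▸ Nat.le_mul_of_pos_right _ (Nat.pos_of_ne_zero h)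
    exact absurd (hcard.trans_lt ht) (not_lt.2 (by exact_mod_cast this))
  have hSe : S = ∅ := by rw [← card_eq_zero, card_eq_succ_mul_card_toLeft hS, hleft, mul_zero]
  exact hasPM_iff.2 ⟨∅, by simp, by simp, by simp [hSe]⟩

open scoped Classical in
theorem absorbsBalanced_of_forall_le_card {Ω : Type*} {F : Finset Ω} {W : Ω → Finset (X ⊕ Y)}
    (hW : (F : Set Ω).PairwiseDisjoint W) (hPM : ∀ ω ∈ F, HasPM H (W ω))
    (hM : M.biUnion id = F.biUnion W) {t : ℝ}
    (habs : ∀ x (v : Fin k ↪ Y),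
      t ≤ #{ω ∈ F | HasPM H (W ω ∪ starEdge x (univ.image v))}) :
    AbsorbsBalanced H k M ((k + 1) * t) := by
  intro S hSM hS hcard
  rw [card_filter_isLeft, card_filter_isRight] at hS
  have hleft : (#S.toLeft : ℝ) ≤ t := by
    rw [card_eq_succ_mul_card_toLeft hS] at hcard
    push_cast at hcard
    exact le_of_mul_le_mul_left hcard (by positivity)
  rw [hM]
  refine .biUnion_union_of_balanced hW hPM ?_ hS fun x v => by exact_mod_cast hleft.trans (habs x v)
  rw [← hM, disjoint_biUnion_left]
  exact fun e he => disjoint_left.2 fun v hve hvS => hSM v hvS e he hve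

end BalancedSets

section Absorption

variable {X Y : Type*} [DecidableEq X] [DecidableEq Y] [Fintype X] [Fintype Y]
  {H : Finset (Finset (X ⊕ Y))} {k N : ℕ} {β : ℝ}

theorem card_fin_sum_fin_prod_fin_pred (k : ℕ) :
    Fintype.card (Fin k ⊕ Fin k × Fin (k - 1)) = k ^ 2 := by
  cases k
  · simp
  · simp
    ring

open scoped Classical in
theorem quarter_pow_mul_card_le_card_disjoint_isAbsorber (hk : 0 < k) (hβ : 0 ≤ β)
    (hlink : ∀ (x : X) (y : Y), (1 / 2 + β / 2) * Fintype.card (Fin (k - 1) → Y) ≤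
      #(pairLinkTuples H (Fin (k - 1)) x y)) {m : ℕ}
    (hm : (k * (k + m) / Fintype.card X + k ^ 2 * (k ^ 2 + m) / Fintype.card Y : ℝ) ≤ β ^ k / 4)
    {U : Finset (X ⊕ Y)} (hU : #U + k + 1 ≤ m) (x : X) (v : Fin k → Y) :
    β ^ k / 4 * Fintype.card ((Fin k → X) × (Fin k ⊕ Fin k × Fin (k - 1) → Y)) ≤
      #{p : (Fin k → X) × (Fin k ⊕ Fin k × Fin (k - 1) → Y) |
        Disjoint (tupleVertices p) U ∧ IsAbsorber H x v p} := by
  have hx : 1 / 2 * Fintype.card (Fin k → Y) ≤ (#(linkTuples H (Fin k) x) : ℝ) := by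
    obtain ⟨K, rfl⟩ := Nat.exists_eq_add_one.2 hk
    refine le_trans ?_ (mul_card_le_card_linkTuples (hlink x))
    gcongr
    linarith
  refine le_trans ?_ (mul_card_le_card_disjoint_isAbsorber hβ hx
    (fun x' y y' => mul_card_le_card_inter (hlink x' y) (hlink x' y')) U (m := m) (by simpa))
  rw [card_fin_sum_fin_prod_fin_pred, Fintype.card_fin]
  gcongr
  push_cast
  linarith

theorem exists_matching_absorbsBalanced [Nonempty X] (hk : 0 < k) (hkY : k ≤ Fintype.card Y)
    (hH : IsPartite k H) (hβ : 0 < β)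
    (hlink : ∀ (x : X) (y : Y), (1 / 2 + β / 2) * Fintype.card (Fin (k - 1) → Y) ≤
      #(pairLinkTuples H (Fin (k - 1)) x y)) {m : ℕ} (hNm : N * (k * (k + 1)) + k + 1 ≤ m)
    (hm : (k * (k + m) / Fintype.card X + k ^ 2 * (k ^ 2 + m) / Fintype.card Y : ℝ) ≤ β ^ k / 4) :
    ∃ M ⊆ H, (M : Set (Finset (X ⊕ Y))).PairwiseDisjoint id ∧ #M ≤ N * k ∧
      AbsorbsBalanced H k M ((k + 1) * (β ^ k / 4 / 2 * N -
        Real.log (Fintype.card X * Fintype.card Y ^ k))) := by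
  classical
  have : Nonempty (Fin k ↪ Y) := Function.Embedding.nonempty_of_card_le (by simpa)
  have : Nonempty Y := Fintype.card_pos_iff.1 (hk.trans_le hkY)
  have hd (p : (Fin k → X) × (Fin k ⊕ Fin k × Fin (k - 1) → Y)) :
      #(tupleVertices p) ≤ k * (k + 1) := by
    refine (card_tupleVertices_le p).trans_eq ?_
    rw [card_fin_sum_fin_prod_fin_pred, Fintype.card_fin]
    ring
  obtain ⟨F, hFd, hFN, hF, hFabs⟩ := exists_pairwiseDisjoint_forall_le_card
    (ι := X × (Fin k ↪ Y)) (N := N)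
    (R := fun p t => IsAbsorber H t.1 t.2 p) (α := β ^ k / 4) (by positivity)
    (fun p => ⟨.inl (p.1 ⟨0, hk⟩), by simp⟩)
    hd (fun U hU t => quarter_pow_mul_card_le_card_disjoint_isAbsorber hk hβ.le hlink hm
      (by lia) t.1 t.2)
  have hPM : ∀ p ∈ F, HasPM H (tupleVertices p) := fun p hp => (hF p hp).choose_spec.hasPM
  obtain ⟨M, hMH, hMd, hM⟩ := hasPM_iff.1 (HasPM.biUnion hFd hPM)
  refine ⟨M, hMH, hMd, ?_, absorbsBalanced_of_forall_le_card hFd hPM hM fun x v => ?_⟩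
  · have hcard : ∀ e ∈ M, #e = k + 1 := fun e he => hH.card_eq (hMH he)
    refine Nat.le_of_mul_le_mul_right (c := k + 1) ?_ k.succ_pos
    calc #M * (k + 1) = #(F.biUnion tupleVertices) := by rw [card_mul_eq_card_biUnion hcard hMd, hM]
      _ ≤ #F * (k * (k + 1)) := card_biUnion_le_card_mul F _ _ fun p _ => hd p
      _ ≤ N * k * (k + 1) := by
          rw [mul_assoc]
          gcongr
  · calc β ^ k / 4 / 2 * N - Real.log (Fintype.card X * Fintype.card Y ^ k)
        ≤ β ^ k / 4 / 2 * N - Real.log (Fintype.card (X × (Fin k ↪ Y))) := by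
          gcongr
          rw [Fintype.card_prod, Fintype.card_embedding_eq, Fintype.card_fin]
          exact_mod_cast Nat.mul_le_mul_left _ (Nat.descFactorial_le_pow _ _)
      _ ≤ #{p ∈ F | IsAbsorber H x v p} := hFabs (x, v)
      _ ≤ #{p ∈ F | HasPM H (tupleVertices p ∪ starEdge x (univ.image v))} :=
          Nat.cast_le.2 (card_le_card (monotone_filter_right _ fun p _ hp =>
            hp.hasPM_union v.injective))

end Absorption

section Asymptotics

theorem eventually_mul_log_le_mul_rpow (C : ℝ) {a s : ℝ} (ha : 0 < a) (hs : 0 < s) :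
    ∀ᶠ n : ℕ in Filter.atTop, C * Real.log n ≤ a * (n : ℝ) ^ s := by
  have h := ((isLittleO_log_rpow_atTop hs).const_mul_left C).comp_tendsto
    tendsto_natCast_atTop_atTop
  filter_upwards [h.def ha] with n hn
  simpa [abs_of_nonneg (Real.rpow_nonneg n.cast_nonneg s)] using (le_abs_self _).trans hn

theorem rpow_three_halves_eq_mul_sqrt {c : ℝ} (hc : 0 < c) : c ^ (3 / 2 : ℝ) = c * √c := by
  rw [Real.sqrt_eq_rpow, ← Real.rpow_one_add' hc.le (by norm_num)]
  norm_num

theorem rpow_one_third_le_mul {c n : ℝ} (hc : 0 < c) (hn : 0 ≤ n)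
    (h : 1 ≤ c ^ (3 / 2 : ℝ) * n) : n ^ (1 / 3 : ℝ) ≤ c * n := by
  rw [rpow_three_halves_eq_mul_sqrt hc] at h
  rw [one_div, Real.rpow_inv_le_iff_of_pos hn (by positivity) (by norm_num), Real.rpow_ofNat]
  calc n ≤ (c * √c * n) ^ 2 * n := le_mul_of_one_le_left hn (one_le_pow₀ h)
    _ = c ^ 2 * √c ^ 2 * n ^ 3 := by ring
    _ = (c * n) ^ 3 := by
        rw [Real.sq_sqrt hc.le]
        ring

theorem half_rpow_mul_le_sub_log {k N n l : ℕ} {a c : ℝ} (ha : 0 < a) (hc : 0 < c)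
    (hca : c ≤ a ^ 2 / 4) (hlog : (k + 1) * Real.log n ≤ a / 4 * (n : ℝ) ^ (1 / 3 : ℝ))
    (hcn : 1 ≤ c ^ (3 / 2 : ℝ) * n) (hN : c * n ≤ N) (hl : 0 < l) (hln : l ≤ n) :
    c ^ (3 / 2 : ℝ) * n / 2 ≤ a / 2 * N - Real.log (l * n ^ k) := by
  have hsqrt : √c ≤ a / 2 := Real.sqrt_le_iff.2 ⟨by positivity, hca.trans_eq (by ring)⟩
  have hpow : c ^ (3 / 2 : ℝ) * n ≤ a / 2 * (c * n) := by
    rw [rpow_three_halves_eq_mul_sqrt hc]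
    calc c * √c * n ≤ c * (a / 2) * n := by gcongr
      _ = a / 2 * (c * n) := by ring
  have hlog' : Real.log (l * n ^ k) ≤ a / 4 * (c * n) := by
    calc Real.log (l * n ^ k) ≤ Real.log (n * n ^ k) := by
          have : 0 < n := hl.trans_le hln
          gcongr
      _ = (k + 1) * Real.log n := by
          rw [← pow_succ', Real.log_pow]
          push_cast
          ring
      _ ≤ a / 4 * (n : ℝ) ^ (1 / 3 : ℝ) := hlog
      _ ≤ a / 4 * (c * n) := by
          gcongr
          exact rpow_one_third_le_mul hc n.cast_nonneg hcn
  have hN' : a / 2 * (c * n) ≤ a / 2 * N := by gcongr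
  linarith

theorem div_add_div_le_mul_div {k N : ℕ} {x n r : ℝ} (hk : 0 < k) (hN : 0 < N) (hr : 0 < r)
    (hn : 0 < n) (hx : r * n ≤ x) {m : ℕ} (hm : m ≤ N * (k * (k + 1)) + k + 1) :
    (k * (k + m) / x + k ^ 2 * (k ^ 2 + m) / n : ℝ) ≤
      3 * k ^ 2 * (k + 1) * (1 / r + k) * (N / n) := by
  have hkN : k * (k + 1) ≤ N * (k * (k + 1)) := Nat.le_mul_of_pos_left _ hN
  have h₁ : k + m ≤ 3 * (N * (k * (k + 1))) := by nlinarith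
  have h₂ : k ^ 2 + m ≤ 3 * (N * (k * (k + 1))) := by nlinarith
  have h₁' : (k + m : ℝ) ≤ 3 * (N * (k * (k + 1))) := by exact_mod_cast h₁
  have h₂' : (k ^ 2 + m : ℝ) ≤ 3 * (N * (k * (k + 1))) := by exact_mod_cast h₂
  calc (k * (k + m) / x + k ^ 2 * (k ^ 2 + m) / n : ℝ)
      ≤ k * (3 * (N * (k * (k + 1)))) / (r * n) +
        k ^ 2 * (3 * (N * (k * (k + 1)))) / n := by gcongr
    _ = 3 * k ^ 2 * (k + 1) * (1 / r + k) * (N / n) := by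
        field_simp

end Asymptotics

theorem IsPartite.density_le_card_pairLinkTuples {X Y : Type*} [DecidableEq X] [DecidableEq Y]
    [Fintype Y] {H : Finset (Finset (X ⊕ Y))} {k : ℕ} {b : ℝ} (hH : IsPartite k H) (hb : 0 < b)
    (hY : (k - 1 : ℕ) * ((k - 1 : ℕ) + 1) * (1 + 2 * b) / b ≤ Fintype.card Y) {x : X} {y : Y}
    (hdeg : (1 / 2 + b) * ((Fintype.card Y - 1).choose (k - 1) : ℝ) ≤ linkDegree H x y) :
    (1 / 2 + b / 2) * Fintype.card (Fin (k - 1) → Y) ≤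
      #(pairLinkTuples H (Fin (k - 1)) x y) := by
  rw [Fintype.card_fun, Fintype.card_fin, Nat.cast_pow]
  calc (1 / 2 + b / 2) * (Fintype.card Y : ℝ) ^ (k - 1)
      ≤ (k - 1).factorial * ((1 / 2 + b) * ((Fintype.card Y - 1).choose (k - 1) : ℝ)) :=
        half_add_mul_pow_le_factorial_mul_choose hb hY
    _ ≤ (k - 1).factorial * linkDegree H x y := by gcongr
    _ ≤ #(pairLinkTuples H (Fin (k - 1)) x y) := by
        exact_mod_cast factorial_mul_linkDegree_le_card_pairLinkTuples hH x y

theorem exists_matching_absorbsBalanced_rpow {X Y : Type*} [DecidableEq X] [DecidableEq Y]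
    [Fintype X] [Fintype Y] {H : Finset (Finset (X ⊕ Y))} {k : ℕ} {b r c : ℝ} (hk : 0 < k)
    (hkY : k ≤ Fintype.card Y) (hH : IsPartite k H) (hb : 0 < b)
    (hlink : ∀ (x : X) (y : Y), (1 / 2 + b / 2) * Fintype.card (Fin (k - 1) → Y) ≤
      #(pairLinkTuples H (Fin (k - 1)) x y))
    (hr : 0 < r) (hrX : r * Fintype.card Y ≤ Fintype.card X)
    (hXY : Fintype.card X ≤ Fintype.card Y)
    (hlog : (k + 1) * Real.log (Fintype.card Y) ≤
      b ^ k / 4 / 4 * (Fintype.card Y : ℝ) ^ (1 / 3 : ℝ))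
    (hc : 0 < c) (hc₁ : c ≤ 1) (hcb : c ≤ (b ^ k / 4) ^ 2 / 4)
    (hcr : 6 * k ^ 2 * (k + 1) * (1 / r + k) * c ≤ b ^ k / 4)
    (hcY : 2 ≤ c ^ (3 / 2 : ℝ) * Fintype.card Y) :
    ∃ M ⊆ H, (M : Set (Finset (X ⊕ Y))).PairwiseDisjoint id ∧
      (#M : ℝ) ≤ 2 * k * c * Fintype.card Y ∧
      AbsorbsBalanced H k M ((k + 1) * c ^ (3 / 2 : ℝ) * Fintype.card Y / 2) := by
  set n := Fintype.card Y
  set N := ⌈c * n⌉₊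
  have hn : (0 : ℝ) < n := Nat.cast_pos.2 (hk.trans_le hkY)
  have hcn : c ^ (3 / 2 : ℝ) * n ≤ c * n := by
    gcongr
    exact Real.rpow_le_self_of_le_one hc.le hc₁ (by norm_num)
  have hN : N ≤ 2 * (c * n) := by linarith [Nat.ceil_lt_add_one (mul_pos hc hn).le]
  have hX : 0 < Fintype.card X := Nat.cast_pos.1 ((mul_pos hr hn).trans_le hrX)
  have := Fintype.card_pos_iff.1 hX
  obtain ⟨M, hMH, hMd, hMN, hM⟩ :=
    exists_matching_absorbsBalanced (N := N) hk hkY hH hb hlink le_rfl <| by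
      calc _ ≤ 3 * k ^ 2 * (k + 1) * (1 / r + k) * (N / n : ℝ) :=
            div_add_div_le_mul_div hk (Nat.ceil_pos.2 (mul_pos hc hn)) hr hn hrX le_rfl
        _ ≤ 3 * k ^ 2 * (k + 1) * (1 / r + k) * (2 * c) := by
            gcongr
            rwa [div_le_iff₀ hn, mul_assoc]
        _ ≤ b ^ k / 4 := by linarith
  refine ⟨M, hMH, hMd, ?_, hM.mono ?_⟩
  · calc (#M : ℝ) ≤ N * k := by exact_mod_cast hMN
      _ ≤ 2 * (c * n) * k := by gcongr
      _ = 2 * k * c * n := by ring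
  · calc (k + 1) * c ^ (3 / 2 : ℝ) * n / 2 = (k + 1) * (c ^ (3 / 2 : ℝ) * n / 2) := by ring
      _ ≤ (k + 1) * (b ^ k / 4 / 2 * N - Real.log (Fintype.card X * n ^ k)) := by
          gcongr
          exact half_rpow_mul_le_sub_log (by positivity) hc hcb hlog (by linarith)
            (Nat.le_ceil (c * n)) hX hXY

theorem absorbing_matching_general {k : ℕ} (hk : 0 < k) {b r : ℝ} (hb : 0 < b) (hr : 0 < r) :
    ∃ (n₁ : ℕ) (c₀ : ℝ), 0 < c₀ ∧ ∀ {X Y : Type*} [Fintype X] [Fintype Y] [DecidableEq X]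
      [DecidableEq Y], n₁ ≤ Fintype.card Y → r * Fintype.card Y ≤ Fintype.card X →
      Fintype.card X ≤ Fintype.card Y → ∀ H : Finset (Finset (X ⊕ Y)), IsPartite k H →
      (∀ x y, (1 / 2 + b) * ((Fintype.card Y - 1).choose (k - 1) : ℝ) ≤ linkDegree H x y) →
      ∀ c : ℝ, 0 < c → c < c₀ →
      ∃ M ⊆ H, (M : Set (Finset (X ⊕ Y))).PairwiseDisjoint id ∧
        (#M : ℝ) ≤ 2 * k * c * Fintype.card Y ∧
        AbsorbsBalanced H k M ((k + 1) * c ^ (3 / 2 : ℝ) * Fintype.card Y / 2) := by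
  obtain ⟨n₁, hn₁⟩ := Filter.eventually_atTop.1 <|
    (eventually_mul_log_le_mul_rpow (k + 1) (a := b ^ k / 4 / 4) (s := 1 / 3) (by positivity)
      (by norm_num)).and <| (Filter.eventually_ge_atTop k).and <|
    tendsto_natCast_atTop_atTop.eventually_ge_atTop
      ((k - 1 : ℕ) * ((k - 1 : ℕ) + 1) * (1 + 2 * b) / b)
  refine ⟨n₁, min 1 (min ((b ^ k / 4) ^ 2 / 4)
    (b ^ k / 4 / (6 * k ^ 2 * (k + 1) * (1 / r + k)))), by positivity, ?_⟩
  intro X Y _ _ _ _ hn hrX hXY H hH hdeg c hc hc₀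
  obtain ⟨hlog, hkY, hY⟩ := hn₁ _ hn
  obtain ⟨hc₁, hcb, hcr⟩ : c < 1 ∧ c < _ ∧ c < _ := by simpa only [lt_min_iff] using hc₀
  obtain hsmall | hlarge := lt_or_ge (c ^ (3 / 2 : ℝ) * Fintype.card Y) 2
  · refine ⟨∅, empty_subset H, by simp, ?_, absorbsBalanced_empty ?_⟩
    · rw [card_empty, Nat.cast_zero]
      positivity
    · nlinarith
  · rw [lt_div_iff₀' (by positivity)] at hcr
    exact exists_matching_absorbsBalanced_rpow hk hkY hH hb
      (fun x y => hH.density_le_card_pairLinkTuples hb hY (hdeg x y)) hr hrX hXY hlog hc hc₁.le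
      hcb.le hcr.le hlarge

theorem one_div_two_mul_mul_le_natDiv {k n : ℕ} (hk : 0 < k) (hkn : k ≤ n) :
    1 / (2 * k) * n ≤ ((n / k : ℕ) : ℝ) := by
  have h : n ≤ 2 * k * (n / k) := by
    have := Nat.div_add_mod n k
    have := Nat.mod_lt n hk
    have := Nat.mul_le_mul_left k (Nat.div_pos hkn hk)
    lia
  rw [one_div, inv_mul_le_iff₀ (by positivity)]
  exact_mod_cast h

/-- absorbing lemma: Let `k ≥ 3` and `0 < b < 1/k`. There exist
`n₁ = n₁(k,b)` and `c₀ = c₀(k,b) > 0` such that for every `n ≥ n₁`: if `H` is a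
`(1,k)`-partite `(k+1)`-graph with partition classes `X = Fin (n/k)`, `[n]` and
`δ₁(N_H(x)) > (1/2 + b)·C(n-1,k-1)` for every `x ∈ X`, then for every
`0 < c < c₀` there is a matching `M` in `H` with `|M| ≤ 2kcn` such that for every
balanced `S ⊆ V(H) \ V(M)` with `|S| ≤ (k+1)·c^{1.5}·n/2`, the induced
subhypergraph `H[V(M) ∪ S]` has a perfect matching. -/
theorem absorbing_matching (k : ℕ) (hk : 3 ≤ k) (b : ℝ)
    (hb0 : 0 < b) (hb1 : b < 1 / (k : ℝ)) :
    ∃ (n₁ : ℕ) (c₀ : ℝ), 0 < c₀ ∧ ∀ n : ℕ, n₁ ≤ n →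
    ∀ H : Finset (Finset (Fin (n / k) ⊕ Fin n)),
      (∀ e ∈ H, ∃ (x : Fin (n / k)) (s : Finset (Fin n)),
        s.card = k ∧ e = insert (Sum.inl x) (s.image Sum.inr)) →
      (∀ (x : Fin (n / k)) (v : Fin n),
        (1 / 2 + b) * (Nat.choose (n - 1) (k - 1) : ℝ)
          < ((H.filter (fun e => Sum.inl x ∈ e ∧ Sum.inr v ∈ e)).card : ℝ)) →
      ∀ c : ℝ, 0 < c → c < c₀ →
      ∃ M ⊆ H, (M : Set (Finset (Fin (n / k) ⊕ Fin n))).Pairwise (fun a b => Disjoint a b) ∧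
        (M.card : ℝ) ≤ 2 * k * c * n ∧
        ∀ S : Finset (Fin (n / k) ⊕ Fin n),
          (∀ v ∈ S, ∀ e ∈ M, v ∉ e) →
          (S.filter (fun v => v.isRight = true)).card
            = k * (S.filter (fun v => v.isLeft = true)).card →
          (S.card : ℝ) ≤ (k + 1) * c ^ ((3 : ℝ) / 2) * n / 2 →
          HasPM H (M.biUnion id ∪ S) := by
  obtain ⟨n₁, c₀, hc₀, h⟩ := absorbing_matching_general (k := k) (r := 1 / (2 * k)) (by lia) hb0
    (by positivity)
  refine ⟨max n₁ k, c₀, hc₀, fun n hn H hH hdeg => ?_⟩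
  have hnk : 1 / (2 * k) * n ≤ ((n / k : ℕ) : ℝ) :=
    one_div_two_mul_mul_le_natDiv (by lia) (le_of_max_le_right hn)
  have hdeg' (x : Fin (n / k)) (v : Fin n) :
      (1 / 2 + b) * ((n - 1).choose (k - 1) : ℝ) ≤ linkDegree H x v := (hdeg x v).le
  simpa only [Fintype.card_fin] using! h (X := Fin (n / k)) (Y := Fin n)
    (by simpa using le_of_max_le_left hn) (by simpa using hnk)
    (by simpa using Nat.div_le_self n k) H hH (by simpa using hdeg')
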